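/- (Proposition 1: existence of the Riemann extensor field.) Suppose the connection D on U is compatible with the metric g. Then for each x ∈ U there exists a bilinear form R_x : (⋀²[ℝ] V) × (⋀²[ℝ] V) → ℝ on the second exterior power of V such that for all vector fields a, b, c, d on U, R_x (a x ∧ b x, c x ∧ d x) = −⟪g x (ρ(a,b,c) x), d x⟫. In particular the quantity ⟪g x (ρ(a,b,c) x), d x⟫ depends only on the pointwise values a x, b x, c x, d x, skew-symmetrically in (a x, b x) and in (c x, d x). -/

import Mathlib

open scoped RealInnerProductSpace

variable {V : Type*} [NormedAddCommGroup V] [InnerProductSpace ℝ V] [FiniteDimensional ℝ V]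

/-- A vector field on `U` is a smooth map `U → V`. -/
def IsVectorField (U : Set V) (X : V → V) : Prop := ContDiffOn ℝ (⊤ : ℕ∞) X U

/-- Directional derivative `(a·∂X)(x) = fderiv ℝ X x (a x)`. -/
noncomputable def dirD (a X : V → V) : V → V := fun x => fderiv ℝ X x (a x)

/-- Lie bracket `[a,b] = a·∂b − b·∂a`. -/
noncomputable def bracket (a b : V → V) : V → V := fun x => dirD a b x - dirD b a x

/-- Smoothness of a connection field `Γ`. -/
def IsConnection (U : Set V) (Γ : V → V →ₗ[ℝ] V →ₗ[ℝ] V) : Prop :=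
  ∀ u v : V, ContDiffOn ℝ (⊤ : ℕ∞) (fun x => Γ x u v) U

/-- Covariant derivative associated to the connection field `Γ`. -/
noncomputable def covD (Γ : V → V →ₗ[ℝ] V →ₗ[ℝ] V) (a X : V → V) : V → V :=
  fun x => fderiv ℝ X x (a x) + Γ x (a x) (X x)

/-- Curvature of an abstract covariant-derivative operator. -/
noncomputable def curvOf (Dop : (V → V) → (V → V) → (V → V)) (a b c : V → V) : V → V :=
  fun x => Dop a (Dop b c) x - Dop b (Dop a c) x - Dop (bracket a b) c x

/-- Curvature field `ρ(a,b,c) = D_a (D_b c) − D_b (D_a c) − D_{[a,b]} c`. -/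
noncomputable def curv (Γ : V → V →ₗ[ℝ] V →ₗ[ℝ] V) : (V → V) → (V → V) → (V → V) → V → V :=
  curvOf (covD Γ)

/-- A metric on `U`: smooth, pointwise self-adjoint and invertible. -/
def IsMetric (U : Set V) (g : V → V →ₗ[ℝ] V) : Prop :=
  (∀ u : V, ContDiffOn ℝ (⊤ : ℕ∞) (fun x => g x u) U) ∧
  ∀ x ∈ U, (∀ u v : V, ⟪g x u, v⟫ = ⟪u, g x v⟫) ∧ Function.Bijective (g x)

/-- Compatibility of an abstract covariant-derivative operator with the metric `g`:
`a·∂(X ·_g Y) = (D_a X) ·_g Y + X ·_g (D_a Y)` on `U`. -/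
def CompatibleD (U : Set V) (Dop : (V → V) → (V → V) → (V → V)) (g : V → V →ₗ[ℝ] V) : Prop :=
  ∀ a X Y : V → V, IsVectorField U a → IsVectorField U X → IsVectorField U Y →
    ∀ x ∈ U, fderiv ℝ (fun y => ⟪g y (X y), Y y⟫) x (a x) =
      ⟪g x (Dop a X x), Y x⟫ + ⟪g x (X x), Dop a Y x⟫

/-- Compatibility of the connection `Γ` with the metric `g`. -/
def Compatible (U : Set V) (Γ : V → V →ₗ[ℝ] V →ₗ[ℝ] V) (g : V → V →ₗ[ℝ] V) : Prop :=
  CompatibleD U (covD Γ) g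

/-- The wedge `u ∧ v` of two vectors, as an element of the second exterior power `⋀[ℝ]^2 V`. -/
noncomputable def wedge2 (u v : V) : ⋀[ℝ]^2 V :=
  ⟨ExteriorAlgebra.ιMulti ℝ 2 ![u, v], ExteriorAlgebra.ιMulti_range ℝ 2 (Set.mem_range_self _)⟩

/-!
The curvature of a connection is the two-form `Ω = dΓ + Γ ∧ Γ`, whose value at a point involves
only the values of `a`, `b`, `c` there: the first derivatives of `a`, `b` cancel against the Lie
bracket and the second derivative of `c` is symmetric. It is alternating in its first two arguments
by construction. Compatibility says that the first derivative of `g` is the action of `Γ` on `g`;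
differentiating once more and using the symmetry of the second derivative of `g`, one finds that
each `Ω(u, v)` is skew-adjoint for `g`. As `g` is symmetric, the four-linear form
`g(Ω(u, v) w, z)` is then alternating in `(w, z)` too, and factors through the exterior squares.
-/

open Filter Topology

section ExteriorSquare

variable {R M N P : Type*} [CommRing R] [AddCommGroup M] [Module R M] [AddCommGroup N] [Module R N]
  [AddCommGroup P] [Module R P]

/-- An alternating bilinear map `B` regarded as an alternating map on pairs, the form in which
Mathlib states the universal property of exterior powers. -/
def alternatingMapOfIsAlt (B : M →ₗ[R] M →ₗ[R] N) (hB : B.IsAlt) : M [⋀^Fin 2]→ₗ[R] N where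
  toFun m := B (m 0) (m 1)
  map_update_add' m i x y := by fin_cases i <;> simp [Function.update]
  map_update_smul' m i c x := by fin_cases i <;> simp [Function.update]
  map_eq_zero_of_eq' m i j h hij := by
    have h01 : m 0 = m 1 := by fin_cases i <;> fin_cases j <;> simp_all
    rw [h01, hB]

/-- The linear map on the exterior square induced by an alternating bilinear map. -/
noncomputable def exteriorSquareLift (B : M →ₗ[R] M →ₗ[R] N) (hB : B.IsAlt) : ⋀[R]^2 M →ₗ[R] N :=
  exteriorPower.alternatingMapLinearEquiv (alternatingMapOfIsAlt B hB)

theorem exteriorSquareLift_ιMulti (B : M →ₗ[R] M →ₗ[R] N) (hB : B.IsAlt) (m : Fin 2 → M) :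
    exteriorSquareLift B hB (exteriorPower.ιMulti R 2 m) = B (m 0) (m 1) :=
  exteriorPower.alternatingMapLinearEquiv_apply_ιMulti _ _

theorem exists_exteriorSquare_lift₂ (B : M →ₗ[R] M →ₗ[R] N →ₗ[R] N →ₗ[R] P) (hB : B.IsAlt)
    (hB' : ∀ u v, (B u v).IsAlt) :
    ∃ L : ⋀[R]^2 M →ₗ[R] ⋀[R]^2 N →ₗ[R] P, ∀ m n,
      L (exteriorPower.ιMulti R 2 m) (exteriorPower.ιMulti R 2 n) =
        B (m 0) (m 1) (n 0) (n 1) := by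
  let C : N →ₗ[R] N →ₗ[R] ⋀[R]^2 M →ₗ[R] P :=
    LinearMap.lflip.toLinearMap ∘ₗ (exteriorSquareLift B hB).flip
  have hC (m : Fin 2 → M) (w z : N) :
      C w z (exteriorPower.ιMulti R 2 m) = B (m 0) (m 1) w z := by
    simp only [C, LinearMap.comp_apply, LinearEquiv.coe_coe, LinearMap.lflip_apply,
      LinearMap.flip_apply, exteriorSquareLift_ιMulti]
  have hC_alt : C.IsAlt := fun w ↦ exteriorPower.linearMap_ext <| AlternatingMap.ext fun m ↦
    (hC m w w).trans (hB' _ _ w)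
  refine ⟨(exteriorSquareLift C hC_alt).flip, fun m n ↦ ?_⟩
  rw [LinearMap.flip_apply, exteriorSquareLift_ιMulti, hC]

end ExteriorSquare

section CurvatureForm

variable {𝕜 E F G : Type*} [NontriviallyNormedField 𝕜] [NormedAddCommGroup E] [NormedSpace 𝕜 E]
  [NormedAddCommGroup F] [NormedSpace 𝕜 F] [NormedAddCommGroup G] [NormedSpace 𝕜 G]
  {A : E → E →L[𝕜] F →L[𝕜] F} {x : E}

/-- The covariant derivative `∇_a c = ∂_a c + A(a) c` of the section `c` of the trivial bundle
with fibre `F`, for the connection form `A`. -/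
noncomputable def covariantDeriv (A : E → E →L[𝕜] F →L[𝕜] F) (a : E → E) (c : E → F) : E → F :=
  fun x ↦ fderiv 𝕜 c x (a x) + A x (a x) (c x)

theorem covariantDeriv_apply (A : E → E →L[𝕜] F →L[𝕜] F) (a : E → E) (c : E → F) (x : E) :
    covariantDeriv A a c x = fderiv 𝕜 c x (a x) + A x (a x) (c x) :=
  rfl

/-- The curvature two-form `dA + A ∧ A` of the connection form `A`, written as the
antisymmetrization of `(u, v) ↦ ∂_u A(v) + A(u) ∘ A(v)`. -/
noncomputable def curvatureForm (A : E → E →L[𝕜] F →L[𝕜] F) (x : E) :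
    E →L[𝕜] E →L[𝕜] F →L[𝕜] F :=
  let T := fderiv 𝕜 A x + (ContinuousLinearMap.compL 𝕜 F F F).bilinearComp (A x) (A x)
  T - T.flip

theorem curvatureForm_apply (A : E → E →L[𝕜] F →L[𝕜] F) (x u v : E) (w : F) :
    curvatureForm A x u v w =
      fderiv 𝕜 A x u v w + A x u (A x v w) - (fderiv 𝕜 A x v u w + A x v (A x u w)) :=
  rfl

theorem curvatureForm_self (A : E → E →L[𝕜] F →L[𝕜] F) (x u : E) : curvatureForm A x u u = 0 :=
  sub_self _

theorem fderiv_covariantDeriv_apply {b : E → E} {c : E → F} (hA : DifferentiableAt 𝕜 A x)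
    (hb : DifferentiableAt 𝕜 b x) (hc : DifferentiableAt 𝕜 c x)
    (hc' : DifferentiableAt 𝕜 (fderiv 𝕜 c) x) (u : E) :
    fderiv 𝕜 (covariantDeriv A b c) x u =
      fderiv 𝕜 (fderiv 𝕜 c) x u (b x) + fderiv 𝕜 c x (fderiv 𝕜 b x u) +
        (fderiv 𝕜 A x u (b x) (c x) + A x (fderiv 𝕜 b x u) (c x) +
          A x (b x) (fderiv 𝕜 c x u)) := by
  have h := (hc'.hasFDerivAt.clm_apply hb.hasFDerivAt).add
    ((hA.hasFDerivAt.clm_apply hb.hasFDerivAt).clm_apply hc.hasFDerivAt)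
  rw [HasFDerivAt.fderiv (f := covariantDeriv A b c) h]
  simp only [ContinuousLinearMap.flip_add, add_apply, ContinuousLinearMap.comp_apply,
    ContinuousLinearMap.flip_apply]
  abel

theorem covariantDeriv_commutator [IsRCLikeNormedField 𝕜] {a b : E → E} {c : E → F}
    (hA : DifferentiableAt 𝕜 A x) (ha : DifferentiableAt 𝕜 a x) (hb : DifferentiableAt 𝕜 b x)
    (hc : ContDiffAt 𝕜 2 c x) :
    covariantDeriv A a (covariantDeriv A b c) x - covariantDeriv A b (covariantDeriv A a c) x -
        covariantDeriv A (VectorField.lieBracket 𝕜 a b) c x =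
      curvatureForm A x (a x) (b x) (c x) := by
  have hc₁ : DifferentiableAt 𝕜 c x := hc.differentiableAt two_ne_zero
  have hc₂ : DifferentiableAt 𝕜 (fderiv 𝕜 c) x :=
    (hc.fderiv_right (m := 1) le_rfl).differentiableAt one_ne_zero
  have hsymm : fderiv 𝕜 (fderiv 𝕜 c) x (a x) (b x) = fderiv 𝕜 (fderiv 𝕜 c) x (b x) (a x) :=
    hc.isSymmSndFDerivAt (minSmoothness_of_isRCLikeNormedField).le _ _
  rw [covariantDeriv_apply A a, covariantDeriv_apply A b (covariantDeriv A a c),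
    fderiv_covariantDeriv_apply hA hb hc₁ hc₂,
    fderiv_covariantDeriv_apply hA ha hc₁ hc₂, hsymm, curvatureForm_apply]
  simp only [covariantDeriv_apply, VectorField.lieBracket, map_add, map_sub, sub_apply]
  abel

-- Express `∂_u ∂_v (B w z)` through `A` and its derivative, and antisymmetrize in `u`, `v`: the
-- left side vanishes, and so do the mixed terms `B (A u w) (A v z) + B (A v w) (A u z)`.
theorem curvatureForm_skewAdjoint [IsRCLikeNormedField 𝕜] {B : E → F →L[𝕜] F →L[𝕜] G}
    (hA : DifferentiableAt 𝕜 A x) (hB : ∀ᶠ y in 𝓝 x, DifferentiableAt 𝕜 B y)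
    (hAB : ∀ᶠ y in 𝓝 x, ∀ u w z, fderiv 𝕜 B y u w z = B y (A y u w) z + B y w (A y u z))
    (u v : E) (w z : F) :
    B x (curvatureForm A x u v w) z + B x w (curvatureForm A x u v z) = 0 := by
  let q' (y : E) : E →L[𝕜] G :=
    .apply 𝕜 G z ∘L B y ∘L .apply 𝕜 F w ∘L A y + B y w ∘L .apply 𝕜 F z ∘L A y
  have hq : ∀ᶠ y in 𝓝 x, HasFDerivAt (fun y ↦ B y w z) (q' y) y := by
    filter_upwards [hB, hAB] with y hBy hABy
    refine ((hBy.hasFDerivAt.clm_apply (hasFDerivAt_const w y)).clm_apply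
      (hasFDerivAt_const z y)).congr_fderiv ?_
    ext u
    simp [q', hABy]
  have hBx := hB.self_of_nhds
  have hABx := hAB.self_of_nhds
  have hq' : DifferentiableAt 𝕜 q' x := by fun_prop
  have hq'' (u v : E) : fderiv 𝕜 q' x u v =
      B x (A x u (A x v w)) z + B x (A x v w) (A x u z) + B x (fderiv 𝕜 A x u v w) z +
        (B x (A x u w) (A x v z) + B x w (A x u (A x v z)) + B x w (fderiv 𝕜 A x u v z)) := by
    have hA_apply (t : F) := (hasFDerivAt_const (.apply 𝕜 F t) x).clm_comp hA.hasFDerivAt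
    have hBA_z := (hasFDerivAt_const (.apply 𝕜 G z) x).clm_comp
      (hBx.hasFDerivAt.clm_comp (hA_apply w))
    have hBw_A := (hBx.hasFDerivAt.clm_apply (hasFDerivAt_const w x)).clm_comp (hA_apply z)
    rw [HasFDerivAt.fderiv (f := q') (hBA_z.add hBw_A)]
    simp only [ContinuousLinearMap.comp_zero, add_zero, ContinuousLinearMap.comp_add, zero_add,
      add_apply, ContinuousLinearMap.comp_apply, ContinuousLinearMap.compL_apply,
      ContinuousLinearMap.flip_apply, ContinuousLinearMap.apply_apply, hABx]
    abel
  have hsymm := second_derivative_symmetric_of_eventually hq hq'.hasFDerivAt u v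
  rw [hq'', hq''] at hsymm
  simp only [curvatureForm_apply, map_add, map_sub, add_apply, sub_apply]
  rw [← sub_eq_zero.mpr hsymm]
  abel

end CurvatureForm

section FiniteDimensional

variable {𝕜 D E F G : Type*} [NontriviallyNormedField 𝕜] [CompleteSpace 𝕜]
  [NormedAddCommGroup D] [NormedSpace 𝕜 D]
  [NormedAddCommGroup E] [NormedSpace 𝕜 E] [FiniteDimensional 𝕜 E]
  [NormedAddCommGroup F] [NormedSpace 𝕜 F] [NormedAddCommGroup G] [NormedSpace 𝕜 G] {x : D}

theorem differentiableAt_clm_of_forall_apply {f : D → E →L[𝕜] F}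
    (hf : ∀ v, DifferentiableAt 𝕜 (fun y ↦ f y v) x) : DifferentiableAt 𝕜 f x := by
  let b := Module.finBasis 𝕜 E
  let coord (i) : E →L[𝕜] 𝕜 := (b.coord i).toContinuousLinearMap
  have hf_eq : f = fun y ↦ ∑ i, (coord i).smulRight (f y (b i)) := by
    ext y v
    conv_lhs => rw [← b.sum_repr v, map_sum]
    simp [coord, -Module.Basis.sum_repr]
  rw [hf_eq]
  fun_prop

theorem differentiableAt_toContinuousBilinearMap [FiniteDimensional 𝕜 F]
    {f : D → E →ₗ[𝕜] F →ₗ[𝕜] G} (hf : ∀ u v, DifferentiableAt 𝕜 (fun y ↦ f y u v) x) :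
    DifferentiableAt 𝕜 (fun y ↦ (f y).toContinuousBilinearMap) x :=
  differentiableAt_clm_of_forall_apply fun u ↦ differentiableAt_clm_of_forall_apply (hf u)

end FiniteDimensional

/-- The connection field `Γ` as a field of continuous bilinear maps, so that it can be
differentiated. -/
noncomputable def connectionForm (Γ : V → V →ₗ[ℝ] V →ₗ[ℝ] V) (x : V) : V →L[ℝ] V →L[ℝ] V :=
  (Γ x).toContinuousBilinearMap

/-- The bilinear form `(v, w) ↦ ⟪g x v, w⟫` of the `g`-scalar product. -/
noncomputable def metricForm (g : V → V →ₗ[ℝ] V) (x : V) : V →L[ℝ] V →L[ℝ] ℝ :=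
  (innerₗ V ∘ₗ g x).toContinuousBilinearMap

theorem metricForm_apply (g : V → V →ₗ[ℝ] V) (x v w : V) : metricForm g x v w = ⟪g x v, w⟫ :=
  rfl

/-- The Riemann tensor `(u, v, w, z) ↦ -⟪g (Ω(u, v) w), z⟫` at `x`, where `Ω` is the curvature
two-form of `Γ`; the sign is the one chosen for the Riemann extensor. -/
noncomputable def riemannForm (Γ : V → V →ₗ[ℝ] V →ₗ[ℝ] V) (g : V → V →ₗ[ℝ] V) (x : V) :
    V →ₗ[ℝ] V →ₗ[ℝ] V →ₗ[ℝ] V →ₗ[ℝ] ℝ :=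
  LinearMap.mk₂ ℝ
    (fun u v ↦ (-(innerₗ V ∘ₗ g x)) ∘ₗ (curvatureForm (connectionForm Γ) x u v).toLinearMap)
    (fun _ _ _ ↦ by simp [LinearMap.comp_add]) (fun _ _ _ ↦ by simp [LinearMap.comp_smul])
    (fun _ _ _ ↦ by simp [LinearMap.comp_add]) (fun _ _ _ ↦ by simp [LinearMap.comp_smul])

theorem riemannForm_apply (Γ : V → V →ₗ[ℝ] V →ₗ[ℝ] V) (g : V → V →ₗ[ℝ] V) (x u v w z : V) :
    riemannForm Γ g x u v w z =
      -metricForm g x (curvatureForm (connectionForm Γ) x u v w) z :=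
  rfl

section RiemannForm

variable {U : Set V} {Γ : V → V →ₗ[ℝ] V →ₗ[ℝ] V} {g : V → V →ₗ[ℝ] V} {x : V}

theorem curv_eq_curvatureForm {a b c : V → V} (hΓ : DifferentiableAt ℝ (connectionForm Γ) x)
    (ha : DifferentiableAt ℝ a x) (hb : DifferentiableAt ℝ b x) (hc : ContDiffAt ℝ 2 c x) :
    curv Γ a b c x = curvatureForm (connectionForm Γ) x (a x) (b x) (c x) :=
  covariantDeriv_commutator hΓ ha hb hc

theorem Compatible.fderiv_metricForm (h : Compatible U Γ g) (hx : x ∈ U)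
    (hg : DifferentiableAt ℝ (metricForm g) x) (u v w : V) :
    fderiv ℝ (metricForm g) x u v w = metricForm g x (connectionForm Γ x u v) w +
      metricForm g x v (connectionForm Γ x u w) := by
  have hconst (v : V) : IsVectorField U fun _ ↦ v := contDiffOn_const
  have hcovD (v : V) : covD Γ (fun _ ↦ u) (fun _ ↦ v) x = Γ x u v := by simp [covD]
  have hfderiv : fderiv ℝ (fun y ↦ ⟪g y v, w⟫) x u = fderiv ℝ (metricForm g) x u v w := by
    have := (hg.hasFDerivAt.clm_apply (hasFDerivAt_const v x)).clm_apply (hasFDerivAt_const w x)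
    rw [HasFDerivAt.fderiv (f := fun y ↦ ⟪g y v, w⟫) this]
    simp
  have h := h _ _ _ (hconst u) (hconst v) (hconst w) x hx
  rwa [hcovD, hcovD, hfderiv] at h

theorem riemannForm_isAlt (Γ : V → V →ₗ[ℝ] V →ₗ[ℝ] V) (g : V → V →ₗ[ℝ] V) (x : V) :
    (riemannForm Γ g x).IsAlt := fun u ↦ by
  ext w z
  simp [riemannForm_apply, curvatureForm_self]

theorem Compatible.riemannForm_apply_isAlt (h : Compatible U Γ g) (hU : U ∈ 𝓝 x)
    (hΓ : DifferentiableAt ℝ (connectionForm Γ) x)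
    (hg : ∀ y ∈ U, DifferentiableAt ℝ (metricForm g) y) (hgx : (g x).IsSymmetric) (u v : V) :
    (riemannForm Γ g x u v).IsAlt := fun w ↦ by
  have hskew := curvatureForm_skewAdjoint hΓ (eventually_of_mem hU hg)
    (eventually_of_mem hU fun y hy ↦ h.fderiv_metricForm hy (hg y hy)) u v w w
  have hsymm : metricForm g x w (curvatureForm (connectionForm Γ) x u v w) =
      metricForm g x (curvatureForm (connectionForm Γ) x u v w) w := by
    rw [metricForm_apply, metricForm_apply, hgx, real_inner_comm]
  rw [riemannForm_apply]
  linarith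

end RiemannForm

theorem exists_riemann_field_general {U : Set V} (hU : IsOpen U)
    {Γ : V → V →ₗ[ℝ] V →ₗ[ℝ] V} (hΓ : ∀ u v, DifferentiableOn ℝ (fun y ↦ Γ y u v) U)
    {g : V → V →ₗ[ℝ] V} (hg : ∀ u, DifferentiableOn ℝ (fun y ↦ g y u) U)
    (hg_symm : ∀ y ∈ U, (g y).IsSymmetric) (hcomp : Compatible U Γ g) {x : V} (hx : x ∈ U) :
    ∃ Rx : (⋀[ℝ]^2 V) →ₗ[ℝ] (⋀[ℝ]^2 V) →ₗ[ℝ] ℝ,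
      ∀ a b c d : V → V, DifferentiableAt ℝ a x → DifferentiableAt ℝ b x → ContDiffAt ℝ 2 c x →
        Rx (wedge2 (a x) (b x)) (wedge2 (c x) (d x)) = -⟪g x (curv Γ a b c x), d x⟫ := by
  have hΓx : DifferentiableAt ℝ (connectionForm Γ) x :=
    differentiableAt_toContinuousBilinearMap fun u v ↦ (hΓ u v).differentiableAt (hU.mem_nhds hx)
  have hg' (y) (hy : y ∈ U) : DifferentiableAt ℝ (metricForm g) y :=
    differentiableAt_toContinuousBilinearMap fun u v ↦
      ((hg u).differentiableAt (hU.mem_nhds hy)).inner ℝ (differentiableAt_const v)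
  obtain ⟨Rx, hRx⟩ := exists_exteriorSquare_lift₂ (riemannForm Γ g x) (riemannForm_isAlt Γ g x)
    (hcomp.riemannForm_apply_isAlt (hU.mem_nhds hx) hΓx hg' (hg_symm x hx))
  refine ⟨Rx, fun a b c d ha hb hc ↦ ?_⟩
  rw [curv_eq_curvatureForm hΓx ha hb hc]
  exact hRx ![a x, b x] ![c x, d x]

/-- Proposition 1: existence of the Riemann extensor field `R` with
`R(a∧b)·(c∧d) = −ρ(a,b,c)·_g d`. -/
theorem exists_riemann_field
    (U : Set V) (hU : IsOpen U)
    (Γ : V → V →ₗ[ℝ] V →ₗ[ℝ] V) (hΓ : IsConnection U Γ)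
    (g : V → V →ₗ[ℝ] V) (hg : IsMetric U g)
    (hcomp : Compatible U Γ g)
    (x : V) (hx : x ∈ U) :
    ∃ Rx : (⋀[ℝ]^2 V) →ₗ[ℝ] (⋀[ℝ]^2 V) →ₗ[ℝ] ℝ,
      ∀ a b c d : V → V, IsVectorField U a → IsVectorField U b →
        IsVectorField U c → IsVectorField U d →
        Rx (wedge2 (a x) (b x)) (wedge2 (c x) (d x)) = -⟪g x (curv Γ a b c x), d x⟫ := by
  obtain ⟨Rx, hRx⟩ := exists_riemann_field_general hU
    (fun u v ↦ (hΓ u v).differentiableOn (by simp)) (fun u ↦ (hg.1 u).differentiableOn (by simp))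
    (fun y hy ↦ (hg.2 y hy).1) hcomp hx
  have hC2 {X : V → V} (hX : IsVectorField U X) : ContDiffAt ℝ 2 X x :=
    (ContDiffOn.contDiffAt hX (hU.mem_nhds hx)).of_le ENat.LEInfty.out
  exact ⟨Rx, fun a b c d ha hb hc _ ↦ hRx a b c d ((hC2 ha).differentiableAt two_ne_zero)
    ((hC2 hb).differentiableAt two_ne_zero) (hC2 hc)⟩
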